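/- Let k be a field of characteristic 0, R = k[x,y,z,u,v], S = R[t], and let S act on Q_S = k[X,Y,Z,U,V,T] by contraction. Let F_B = XU^2 + YUV + ZV^2, I_B = Ann_R(F_B), B = R/I_B, G = X^2·U·V + X·Y·V^2, F = T·F_B + G ∈ Q_S, A = k[t]/(t^2), and C = S/Ann_S(F). Then (I_B)^2 ∘ G = 0, C is a free extension of A with fiber B (via ι : t ↦ t and π : x_i ↦ x_i, t ↦ 0), and the Hilbert function of C is (1, 6, 10, 6, 1). -/

import Mathlib

set_option synthInstance.maxHeartbeats 1000000
set_option maxHeartbeats 1000000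

open Classical in
/-- Contraction action of `k[x_1,…]` on `k[X_1,…]` (the two polynomial rings being
identified): determined on monomials by `x^a ∘ X^b = X^{b-a}` if `a ≤ b` componentwise,
and `0` otherwise. -/
noncomputable def contract {k : Type*} [CommRing k] {σ : Type*}
    (f F : MvPolynomial σ k) : MvPolynomial σ k :=
  ∑ b ∈ F.support, ∑ a ∈ f.support,
    if a ≤ b then
      MvPolynomial.monomial (b - a) (MvPolynomial.coeff a f * MvPolynomial.coeff b F)
    else 0

/-- The annihilator `Ann F = {f : f ∘ F = 0}` of `F` under contraction, as an ideal. -/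
noncomputable def annIdeal {k : Type*} [CommRing k] {σ : Type*}
    (F : MvPolynomial σ k) : Ideal (MvPolynomial σ k) :=
  Ideal.span {f | contract f F = 0}

/-- The Perazzo cubic `F_B = XU² + YUV + ZV²` in `k[X,Y,Z,U,V]`
(variables `x,y,z,u,v = X 0,…,X 4`). -/
noncomputable def perazzoCubic (k : Type*) [Field k] : MvPolynomial (Fin 5) k :=
  MvPolynomial.X 0 * MvPolynomial.X 3 ^ 2 +
    MvPolynomial.X 1 * MvPolynomial.X 3 * MvPolynomial.X 4 +
    MvPolynomial.X 2 * MvPolynomial.X 4 ^ 2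

/-- The quartic `G = X²UV + XYV²` in `k[X,Y,Z,U,V]`. -/
noncomputable def perazzoG (k : Type*) [Field k] : MvPolynomial (Fin 5) k :=
  MvPolynomial.X 0 ^ 2 * MvPolynomial.X 3 * MvPolynomial.X 4 +
    MvPolynomial.X 0 * MvPolynomial.X 1 * MvPolynomial.X 4 ^ 2

/-- `F = T·F_B + G ∈ k[X,Y,Z,U,V,T]` (with `T = X 5` the last variable). -/
noncomputable def perazzoF (k : Type*) [Field k] : MvPolynomial (Fin 6) k :=
  MvPolynomial.X (Fin.last 5) * MvPolynomial.rename Fin.castSucc (perazzoCubic k) +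
    MvPolynomial.rename Fin.castSucc (perazzoG k)

/-- The induced grading on the quotient `C = S/Ann_S(F)`. -/
noncomputable def perazzoCGrade (k : Type*) [Field k] (d : ℕ) :
    Submodule k (MvPolynomial (Fin 6) k ⧸ annIdeal (perazzoF k)) :=
  (MvPolynomial.homogeneousSubmodule (Fin 6) k d).map
    (Ideal.Quotient.mkₐ k (annIdeal (perazzoF k))).toLinearMap

section helpers
open MvPolynomial

theorem coeff_contract {k : Type*} [CommRing k] {σ : Type*} (f F : MvPolynomial σ k)
    (c : σ →₀ ℕ) [DecidableRel (fun a b : σ →₀ ℕ => a ≤ b)] :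
    coeff c (contract f F) = ∑ b ∈ F.support, if c ≤ b then coeff (b - c) f * coeff b F else 0 := by
  classical
  unfold contract
  rw [coeff_sum]
  refine Finset.sum_congr rfl fun b _ => ?_
  rw [coeff_sum]
  by_cases h : c ≤ b
  · rw [if_pos h]
    rw [Finset.sum_eq_single (b - c)]
    · rw [if_pos tsub_le_self, coeff_monomial, if_pos (tsub_tsub_cancel_of_le h)]
    · intro a _ hne
      split_ifs with hab
      · rw [coeff_monomial, if_neg]
        rintro rfl
        exact hne (tsub_tsub_cancel_of_le hab).symm
      · simp
    · intro hn
      rw [notMem_support_iff] at hn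
      simp [hn]
  · rw [if_neg h]
    refine Finset.sum_eq_zero fun a _ => ?_
    split_ifs with hab
    · rw [coeff_monomial, if_neg]
      rintro rfl
      exact h tsub_le_self
    · simp

theorem coeff_contract_of_subset {k : Type*} [CommRing k] {σ : Type*} (f F : MvPolynomial σ k)
    (c : σ →₀ ℕ) [DecidableRel (fun a b : σ →₀ ℕ => a ≤ b)] (s : Finset (σ →₀ ℕ))
    (hs : F.support ⊆ s) :
    coeff c (contract f F) = ∑ b ∈ s, if c ≤ b then coeff (b - c) f * coeff b F else 0 := by
  rw [coeff_contract]
  refine Finset.sum_subset hs fun b _ hb => ?_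
  rw [notMem_support_iff] at hb
  simp [hb]

theorem coeff_contract_add {k : Type*} [CommRing k] {σ : Type*} (f F G : MvPolynomial σ k)
    (c : σ →₀ ℕ) :
    coeff c (contract f (F + G)) = coeff c (contract f F) + coeff c (contract f G) := by
  classical
  rw [coeff_contract_of_subset f (F + G) c (F.support ∪ G.support) support_add,
    coeff_contract_of_subset f F c (F.support ∪ G.support) Finset.subset_union_left,
    coeff_contract_of_subset f G c (F.support ∪ G.support) Finset.subset_union_right,
    ← Finset.sum_add_distrib]
  refine Finset.sum_congr rfl fun b _ => ?_
  split_ifs <;> simp [mul_add]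

theorem coeff_contract_monomial {k : Type*} [CommRing k] {σ : Type*} (f : MvPolynomial σ k)
    (b c : σ →₀ ℕ) [DecidableRel (fun a b : σ →₀ ℕ => a ≤ b)] :
    coeff c (contract f (monomial b 1)) = if c ≤ b then coeff (b - c) f else 0 := by
  classical
  rw [coeff_contract_of_subset f _ c {b} support_monomial_subset]
  simp

theorem contract_zero_iff {k : Type*} [CommRing k] {σ : Type*} (f F : MvPolynomial σ k) :
    contract f F = 0 ↔ ∀ c, coeff c (contract f F) = 0 := by
  rw [MvPolynomial.ext_iff]; simp

theorem contract_add_zero {k : Type*} [CommRing k] {σ : Type*} {f g F : MvPolynomial σ k}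
    (hf : contract f F = 0) (hg : contract g F = 0) : contract (f + g) F = 0 := by
  classical
  rw [contract_zero_iff] at *
  intro c
  have h1 := hf c
  have h2 := hg c
  rw [coeff_contract] at *
  refine Eq.trans ?_ ((congrArg₂ (· + ·) h1 h2).trans (add_zero (0 : k)))
  rw [← Finset.sum_add_distrib]
  refine Finset.sum_congr rfl fun b _ => ?_
  split_ifs <;> simp [add_mul]

theorem contract_monomial_mul_zero {k : Type*} [CommRing k] {σ : Type*} {f F : MvPolynomial σ k}
    (a : σ →₀ ℕ) (r : k) (hf : contract f F = 0) : contract (monomial a r * f) F = 0 := by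
  classical
  rw [contract_zero_iff] at *
  intro c
  have h1 := hf (c + a)
  rw [coeff_contract] at *
  refine Eq.trans ?_ ((congrArg (r * ·) h1).trans (mul_zero r))
  rw [Finset.mul_sum]
  refine Finset.sum_congr rfl fun b _ => ?_
  rw [coeff_monomial_mul']
  by_cases h : c ≤ b
  · have : a ≤ b - c ↔ c + a ≤ b := le_tsub_iff_left h
    simp only [if_pos h, this, tsub_tsub]
    split_ifs <;> simp [mul_assoc]
  · have : ¬ c + a ≤ b := fun h' => h (le_trans le_self_add h')
    simp [h, this]

theorem mem_annIdeal {k : Type*} [CommRing k] {σ : Type*} (f F : MvPolynomial σ k) :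
    f ∈ annIdeal F ↔ contract f F = 0 := by
  constructor
  · intro h
    unfold annIdeal at h
    induction h using Submodule.span_induction with
    | mem x h => exact h
    | zero => simp [contract]
    | add x y _ _ hx hy => exact contract_add_zero hx hy
    | smul a x _ hx =>
      rw [smul_eq_mul]
      induction a using MvPolynomial.induction_on' with
      | monomial u a => exact contract_monomial_mul_zero u a hx
      | add p q hp hq => rw [add_mul]; exact contract_add_zero hp hq
  · exact fun h => Ideal.subset_span h

/-- exponent vectors -/
noncomputable def m6 (a b c d e t : ℕ) : Fin 6 →₀ ℕ :=
  Finsupp.equivFunOnFinite.symm ![a, b, c, d, e, t]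
/-- exponent vectors -/
noncomputable def m5 (a b c d e : ℕ) : Fin 5 →₀ ℕ :=
  Finsupp.equivFunOnFinite.symm ![a, b, c, d, e]

theorem m6_le {a b c d e t a' b' c' d' e' t' : ℕ} : m6 a b c d e t ≤ m6 a' b' c' d' e' t' ↔
    a ≤ a' ∧ b ≤ b' ∧ c ≤ c' ∧ d ≤ d' ∧ e ≤ e' ∧ t ≤ t' := by
  rw [Finsupp.le_def]; simp [m6, Fin.forall_fin_succ]
theorem m5_le {a b c d e a' b' c' d' e' : ℕ} : m5 a b c d e ≤ m5 a' b' c' d' e' ↔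
    a ≤ a' ∧ b ≤ b' ∧ c ≤ c' ∧ d ≤ d' ∧ e ≤ e' := by
  rw [Finsupp.le_def]; simp [m5, Fin.forall_fin_succ]
theorem m6_inj {a b c d e t a' b' c' d' e' t' : ℕ} : m6 a b c d e t = m6 a' b' c' d' e' t' ↔
    a = a' ∧ b = b' ∧ c = c' ∧ d = d' ∧ e = e' ∧ t = t' := by
  rw [Finsupp.ext_iff]; simp [m6, Fin.forall_fin_succ]
theorem m5_inj {a b c d e a' b' c' d' e' : ℕ} : m5 a b c d e = m5 a' b' c' d' e' ↔
    a = a' ∧ b = b' ∧ c = c' ∧ d = d' ∧ e = e' := by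
  rw [Finsupp.ext_iff]; simp [m5, Fin.forall_fin_succ]
theorem m6_sub {a b c d e t a' b' c' d' e' t' : ℕ} : m6 a b c d e t - m6 a' b' c' d' e' t' =
    m6 (a - a') (b - b') (c - c') (d - d') (e - e') (t - t') := by
  rw [Finsupp.ext_iff]; simp [m6, Fin.forall_fin_succ]
theorem m5_sub {a b c d e a' b' c' d' e' : ℕ} : m5 a b c d e - m5 a' b' c' d' e' =
    m5 (a - a') (b - b') (c - c') (d - d') (e - e') := by
  rw [Finsupp.ext_iff]; simp [m5, Fin.forall_fin_succ]
theorem m6_add {a b c d e t a' b' c' d' e' t' : ℕ} : m6 a b c d e t + m6 a' b' c' d' e' t' =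
    m6 (a + a') (b + b') (c + c') (d + d') (e + e') (t + t') := by
  rw [Finsupp.ext_iff]; simp [m6, Fin.forall_fin_succ]
theorem m6_surj (m : Fin 6 →₀ ℕ) : m = m6 (m 0) (m 1) (m 2) (m 3) (m 4) (m 5) := by
  rw [Finsupp.ext_iff]; simp [m6, Fin.forall_fin_succ]
theorem m5_surj (m : Fin 5 →₀ ℕ) : m = m5 (m 0) (m 1) (m 2) (m 3) (m 4) := by
  rw [Finsupp.ext_iff]; simp [m5, Fin.forall_fin_succ]
theorem m6_deg {a b c d e t : ℕ} : (m6 a b c d e t).degree = a + b + c + d + e + t := by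
  rw [Finsupp.degree_eq_sum]; simp [m6, Fin.sum_univ_succ]; ring
theorem monomial_m6 {k : Type*} [CommRing k] (a b c d e t : ℕ) :
    (monomial (m6 a b c d e t) (1 : k)) =
      X 0 ^ a * X 1 ^ b * X 2 ^ c * X 3 ^ d * X 4 ^ e * X 5 ^ t := by
  rw [monomial_eq, Finsupp.prod_fintype _ _ (by simp)]
  simp [m6, Fin.prod_univ_succ]; ring
theorem monomial_m5 {k : Type*} [CommRing k] (a b c d e : ℕ) :
    (monomial (m5 a b c d e) (1 : k)) =
      X 0 ^ a * X 1 ^ b * X 2 ^ c * X 3 ^ d * X 4 ^ e := by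
  rw [monomial_eq, Finsupp.prod_fintype _ _ (by simp)]
  simp [m5, Fin.prod_univ_succ]; ring

theorem perazzoCubic_eq (k : Type*) [Field k] : perazzoCubic k =
    monomial (m5 1 0 0 2 0) 1 + monomial (m5 0 1 0 1 1) 1 + monomial (m5 0 0 1 0 2) 1 := by
  simp [monomial_m5, perazzoCubic]
theorem perazzoG_eq (k : Type*) [Field k] : perazzoG k =
    monomial (m5 2 0 0 1 1) 1 + monomial (m5 1 1 0 0 2) 1 := by
  simp [monomial_m5, perazzoG]
theorem perazzoF_eq (k : Type*) [Field k] : perazzoF k =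
    monomial (m6 1 0 0 2 0 1) 1 + monomial (m6 0 1 0 1 1 1) 1 + monomial (m6 0 0 1 0 2 1) 1 +
    monomial (m6 2 0 0 1 1 0) 1 + monomial (m6 1 1 0 0 2 0) 1 := by
  simp only [monomial_m6, perazzoF, perazzoCubic, perazzoG, map_add, map_mul, map_pow, rename_X]
  have h0 : (Fin.castSucc 0 : Fin 6) = 0 := rfl
  have h1 : (Fin.castSucc 1 : Fin 6) = 1 := rfl
  have h2 : (Fin.castSucc 2 : Fin 6) = 2 := rfl
  have h3 : (Fin.castSucc 3 : Fin 6) = 3 := rfl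
  have h4 : (Fin.castSucc 4 : Fin 6) = 4 := rfl
  have h5 : (Fin.last 5 : Fin 6) = 5 := rfl
  rw [h0, h1, h2, h3, h4, h5]
  ring

theorem ann_cubic_iff {k : Type*} [Field k] (f : MvPolynomial (Fin 5) k) :
    f ∈ annIdeal (perazzoCubic k) ↔
    (coeff (m5 0 0 0 0 0) f = 0 ∧ coeff (m5 1 0 0 0 0) f = 0 ∧ coeff (m5 0 1 0 0 0) f = 0 ∧
     coeff (m5 0 0 1 0 0) f = 0 ∧ coeff (m5 0 0 0 1 0) f = 0 ∧ coeff (m5 0 0 0 0 1) f = 0 ∧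
     coeff (m5 0 0 0 2 0) f = 0 ∧ coeff (m5 0 0 0 1 1) f = 0 ∧ coeff (m5 0 0 0 0 2) f = 0 ∧
     coeff (m5 1 0 0 1 0) f + coeff (m5 0 1 0 0 1) f = 0 ∧
     coeff (m5 0 1 0 1 0) f + coeff (m5 0 0 1 0 1) f = 0 ∧
     coeff (m5 1 0 0 2 0) f + coeff (m5 0 1 0 1 1) f + coeff (m5 0 0 1 0 2) f = 0) := by
  classical
  rw [mem_annIdeal, contract_zero_iff, perazzoCubic_eq]
  simp only [coeff_contract_add, coeff_contract_monomial]
  constructor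
  · intro h
    refine ⟨?_, ?_, ?_, ?_, ?_, ?_, ?_, ?_, ?_, ?_, ?_, ?_⟩
    · simpa [-tsub_self, m5_le, m5_sub] using h (m5 1 0 0 2 0)
    · simpa [-tsub_self, m5_le, m5_sub] using h (m5 0 0 0 2 0)
    · simpa [-tsub_self, m5_le, m5_sub] using h (m5 0 0 0 1 1)
    · simpa [-tsub_self, m5_le, m5_sub] using h (m5 0 0 0 0 2)
    · simpa [-tsub_self, m5_le, m5_sub] using h (m5 1 0 0 1 0)
    · simpa [-tsub_self, m5_le, m5_sub] using h (m5 0 0 1 0 1)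
    · simpa [-tsub_self, m5_le, m5_sub] using h (m5 1 0 0 0 0)
    · simpa [-tsub_self, m5_le, m5_sub] using h (m5 0 1 0 0 0)
    · simpa [-tsub_self, m5_le, m5_sub] using h (m5 0 0 1 0 0)
    · simpa [-tsub_self, m5_le, m5_sub] using h (m5 0 0 0 1 0)
    · simpa [-tsub_self, m5_le, m5_sub] using h (m5 0 0 0 0 1)
    · simpa [-tsub_self, m5_le, m5_sub] using h (m5 0 0 0 0 0)
  · rintro ⟨h1, h2, h3, h4, h5, h6, h7, h8, h9, h10, h11, h12⟩ c
    rw [m5_surj c]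
    generalize c 0 = c0
    generalize c 1 = c1
    generalize c 2 = c2
    generalize c 3 = c3
    generalize c 4 = c4
    by_cases H : (m5 c0 c1 c2 c3 c4 ≤ m5 1 0 0 2 0) ∨ (m5 c0 c1 c2 c3 c4 ≤ m5 0 1 0 1 1) ∨
      (m5 c0 c1 c2 c3 c4 ≤ m5 0 0 1 0 2)
    · rcases H with H | H | H <;> rw [m5_le] at H <;> obtain ⟨g0, g1, g2, g3, g4⟩ := H <;>
        interval_cases c0 <;> interval_cases c1 <;> interval_cases c2 <;> interval_cases c3 <;>
        interval_cases c4 <;> simp [-tsub_self, m5_le, m5_sub, *]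
    · push Not at H
      rw [if_neg H.1, if_neg H.2.1, if_neg H.2.2]; simp

theorem ann_G_of {k : Type*} [Field k] (f : MvPolynomial (Fin 5) k)
    (h : coeff (m5 0 0 0 0 0) f = 0 ∧ coeff (m5 1 0 0 0 0) f = 0 ∧ coeff (m5 0 1 0 0 0) f = 0 ∧
     coeff (m5 0 0 0 1 0) f = 0 ∧ coeff (m5 0 0 0 0 1) f = 0 ∧
     coeff (m5 0 0 0 1 1) f = 0 ∧ coeff (m5 0 0 0 0 2) f = 0 ∧ coeff (m5 1 0 0 0 1) f = 0 ∧
     coeff (m5 1 0 0 1 0) f + coeff (m5 0 1 0 0 1) f = 0 ∧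
     coeff (m5 2 0 0 0 0) f = 0 ∧ coeff (m5 1 1 0 0 0) f = 0 ∧
     coeff (m5 1 0 0 1 1) f + coeff (m5 0 1 0 0 2) f = 0 ∧ coeff (m5 1 0 0 0 2) f = 0 ∧
     coeff (m5 2 0 0 0 1) f = 0 ∧ coeff (m5 2 0 0 1 0) f + coeff (m5 1 1 0 0 1) f = 0 ∧
     coeff (m5 2 0 0 1 1) f + coeff (m5 1 1 0 0 2) f = 0) : contract f (perazzoG k) = 0 := by
  classical
  rw [contract_zero_iff, perazzoG_eq]
  simp only [coeff_contract_add, coeff_contract_monomial]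
  obtain ⟨h1, h2, h3, h4, h5, h6, h7, h8, h9, h10, h11, h12, h13, h14, h15, h16⟩ := h
  intro c
  rw [m5_surj c]
  generalize c 0 = c0
  generalize c 1 = c1
  generalize c 2 = c2
  generalize c 3 = c3
  generalize c 4 = c4
  by_cases H : (m5 c0 c1 c2 c3 c4 ≤ m5 2 0 0 1 1) ∨ (m5 c0 c1 c2 c3 c4 ≤ m5 1 1 0 0 2)
  · rcases H with H | H <;> rw [m5_le] at H <;> obtain ⟨g0, g1, g2, g3, g4⟩ := H <;>
      interval_cases c0 <;> interval_cases c1 <;> interval_cases c2 <;> interval_cases c3 <;>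
      interval_cases c4 <;> simp [-tsub_self, m5_le, m5_sub, *]
  · push Not at H
    rw [if_neg H.1, if_neg H.2]; simp

theorem ann_F_iff {k : Type*} [Field k] (f : MvPolynomial (Fin 6) k) :
    f ∈ annIdeal (perazzoF k) ↔
    (coeff (m6 0 0 0 0 0 0) f = 0) ∧
    (coeff (m6 1 0 0 0 0 0) f = 0 ∧ coeff (m6 0 1 0 0 0 0) f = 0 ∧ coeff (m6 0 0 1 0 0 0) f = 0 ∧
     coeff (m6 0 0 0 1 0 0) f = 0 ∧ coeff (m6 0 0 0 0 1 0) f = 0 ∧ coeff (m6 0 0 0 0 0 1) f = 0) ∧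
    (coeff (m6 0 0 0 2 0 0) f = 0 ∧ coeff (m6 0 0 0 1 1 0) f = 0 ∧ coeff (m6 0 0 0 0 2 0) f = 0 ∧
     coeff (m6 0 0 0 0 1 1) f = 0 ∧ coeff (m6 1 0 0 0 0 1) f = 0 ∧
     coeff (m6 0 0 0 1 0 1) f + coeff (m6 1 0 0 0 1 0) f = 0 ∧
     coeff (m6 1 0 0 1 0 0) f + coeff (m6 0 1 0 0 1 0) f = 0 ∧
     coeff (m6 0 1 0 0 0 1) f + coeff (m6 2 0 0 0 0 0) f = 0 ∧
     coeff (m6 0 0 1 0 0 1) f + coeff (m6 1 1 0 0 0 0) f = 0 ∧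
     coeff (m6 0 1 0 1 0 0) f + coeff (m6 0 0 1 0 1 0) f = 0) ∧
    (coeff (m6 0 0 0 2 0 1) f + coeff (m6 1 0 0 1 1 0) f + coeff (m6 0 1 0 0 2 0) f = 0 ∧
     coeff (m6 0 0 0 1 1 1) f + coeff (m6 1 0 0 0 2 0) f = 0 ∧
     coeff (m6 0 0 0 0 2 1) f = 0 ∧
     coeff (m6 1 0 0 1 0 1) f + coeff (m6 0 1 0 0 1 1) f + coeff (m6 2 0 0 0 1 0) f = 0 ∧
     coeff (m6 0 1 0 1 0 1) f + coeff (m6 0 0 1 0 1 1) f + coeff (m6 2 0 0 1 0 0) f +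
       coeff (m6 1 1 0 0 1 0) f = 0 ∧
     coeff (m6 1 0 0 2 0 0) f + coeff (m6 0 1 0 1 1 0) f + coeff (m6 0 0 1 0 2 0) f = 0) ∧
    (coeff (m6 1 0 0 2 0 1) f + coeff (m6 0 1 0 1 1 1) f + coeff (m6 0 0 1 0 2 1) f +
      coeff (m6 2 0 0 1 1 0) f + coeff (m6 1 1 0 0 2 0) f = 0) := by
  classical
  rw [mem_annIdeal, contract_zero_iff, perazzoF_eq]
  simp only [coeff_contract_add, coeff_contract_monomial]
  constructor
  · intro h
    refine ⟨?_, ⟨?_, ?_, ?_, ?_, ?_, ?_⟩, ⟨?_, ?_, ?_, ?_, ?_, ?_, ?_, ?_, ?_, ?_⟩,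
      ⟨?_, ?_, ?_, ?_, ?_, ?_⟩, ?_⟩
    · simpa [-tsub_self, m6_le, m6_sub] using h (m6 1 0 0 2 0 1)
    · simpa [-tsub_self, m6_le, m6_sub] using h (m6 0 0 0 2 0 1)
    · simpa [-tsub_self, m6_le, m6_sub] using h (m6 0 0 0 1 1 1)
    · simpa [-tsub_self, m6_le, m6_sub] using h (m6 0 0 0 0 2 1)
    · simpa [-tsub_self, m6_le, m6_sub] using h (m6 1 0 0 1 0 1)
    · simpa [-tsub_self, m6_le, m6_sub] using h (m6 0 0 1 0 1 1)
    · simpa [-tsub_self, m6_le, m6_sub] using h (m6 1 0 0 2 0 0)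
    · simpa [-tsub_self, m6_le, m6_sub] using h (m6 1 0 0 0 0 1)
    · simpa [-tsub_self, m6_le, m6_sub] using h (m6 0 1 0 0 0 1)
    · simpa [-tsub_self, m6_le, m6_sub] using h (m6 0 0 1 0 0 1)
    · simpa [-tsub_self, m6_le, m6_sub] using h (m6 0 0 1 0 1 0)
    · simpa [-tsub_self, m6_le, m6_sub] using h (m6 0 0 0 2 0 0)
    · simpa [-tsub_self, m6_le, m6_sub] using h (m6 1 0 0 1 0 0)
    · simpa [-tsub_self, m6_le, m6_sub] using h (m6 0 0 0 1 0 1)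
    · simpa [-tsub_self, m6_le, m6_sub] using h (m6 0 0 0 1 1 0)
    · simpa [-tsub_self, m6_le, m6_sub] using h (m6 0 0 0 0 2 0)
    · simpa [-tsub_self, m6_le, m6_sub] using h (m6 0 0 0 0 1 1)
    · simpa [-tsub_self, m6_le, m6_sub] using h (m6 1 0 0 0 0 0)
    · simpa [-tsub_self, m6_le, m6_sub] using h (m6 0 1 0 0 0 0)
    · simpa [-tsub_self, m6_le, m6_sub] using h (m6 0 0 1 0 0 0)
    · simpa [-tsub_self, m6_le, m6_sub] using h (m6 0 0 0 1 0 0)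
    · simpa [-tsub_self, m6_le, m6_sub] using h (m6 0 0 0 0 1 0)
    · simpa [-tsub_self, m6_le, m6_sub] using h (m6 0 0 0 0 0 1)
    · simpa [-tsub_self, m6_le, m6_sub] using h (m6 0 0 0 0 0 0)
  · rintro ⟨h1, ⟨h2, h3, h4, h5, h6, h7⟩, ⟨h8, h9, h10, h11, h12, h13, h14, h15, h16, h17⟩,
      ⟨h18, h19, h20, h21, h22, h23⟩, h24⟩ c
    rw [m6_surj c]
    generalize c 0 = c0
    generalize c 1 = c1
    generalize c 2 = c2
    generalize c 3 = c3
    generalize c 4 = c4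
    generalize c 5 = c5
    by_cases H : (m6 c0 c1 c2 c3 c4 c5 ≤ m6 1 0 0 2 0 1) ∨ (m6 c0 c1 c2 c3 c4 c5 ≤ m6 0 1 0 1 1 1) ∨
      (m6 c0 c1 c2 c3 c4 c5 ≤ m6 0 0 1 0 2 1) ∨ (m6 c0 c1 c2 c3 c4 c5 ≤ m6 2 0 0 1 1 0) ∨
      (m6 c0 c1 c2 c3 c4 c5 ≤ m6 1 1 0 0 2 0)
    · rcases H with H | H | H | H | H <;> rw [m6_le] at H <;>
        obtain ⟨g0, g1, g2, g3, g4, g5⟩ := H <;>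
        interval_cases c0 <;> interval_cases c1 <;> interval_cases c2 <;> interval_cases c3 <;>
        interval_cases c4 <;> interval_cases c5 <;> simp [-tsub_self, m6_le, m6_sub, *]
    · push Not at H
      rw [if_neg H.1, if_neg H.2.1, if_neg H.2.2.1, if_neg H.2.2.2.1, if_neg H.2.2.2.2]; simp

theorem coeff_ren0 {k : Type*} [Field k] (f : MvPolynomial (Fin 5) k) (a b c d e : ℕ) :
    coeff (m6 a b c d e 0) (rename Fin.castSucc f) = coeff (m5 a b c d e) f := by
  rw [← coeff_rename_mapDomain Fin.castSucc (Fin.castSucc_injective 5) f]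
  congr 1
  ext i
  induction i using Fin.lastCases with
  | last =>
    rw [Finsupp.mapDomain_of_notMem_range]
    · rfl
    · rintro ⟨j, hj⟩
      exact absurd hj (Fin.castSucc_lt_last j).ne
  | cast i =>
    rw [Finsupp.mapDomain_apply (Fin.castSucc_injective 5)]
    fin_cases i <;> rfl

theorem coeff_ren1 {k : Type*} [Field k] (f : MvPolynomial (Fin 5) k) (a b c d e : ℕ) :
    coeff (m6 a b c d e 1) (rename Fin.castSucc f) = 0 := by
  apply coeff_rename_eq_zero
  intro u hu
  exfalso
  have h : Finsupp.mapDomain Fin.castSucc u (Fin.last 5) = 0 := by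
    rw [Finsupp.mapDomain_of_notMem_range]
    rintro ⟨j, hj⟩
    exact absurd hj (Fin.castSucc_lt_last j).ne
  rw [hu] at h
  exact absurd h (by show ¬ (1 = 0); simp)

theorem X5_eq {k : Type*} [Field k] : (X (Fin.last 5) : MvPolynomial (Fin 6) k) =
    monomial (m6 0 0 0 0 0 1) 1 := by
  rw [monomial_m6]; simp

theorem coeff_X5_0 {k : Type*} [Field k] (f : MvPolynomial (Fin 6) k) (a b c d e : ℕ) :
    coeff (m6 a b c d e 0) (X (Fin.last 5) * f) = 0 := by
  classical
  rw [X5_eq, coeff_monomial_mul', if_neg]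
  simp [m6_le]

theorem coeff_X5_1 {k : Type*} [Field k] (f : MvPolynomial (Fin 6) k) (a b c d e : ℕ) :
    coeff (m6 a b c d e 1) (X (Fin.last 5) * f) = coeff (m6 a b c d e 0) f := by
  classical
  rw [X5_eq, coeff_monomial_mul', if_pos]
  · simp [m6_sub]
  · simp [m6_le]

/-- setting t = 0 -/
noncomputable def aev (k : Type*) [Field k] : MvPolynomial (Fin 6) k →ₐ[k] MvPolynomial (Fin 5) k :=
  MvPolynomial.aeval (fun i => Fin.lastCases 0 MvPolynomial.X i)

theorem aev_rename {k : Type*} [Field k] (f : MvPolynomial (Fin 5) k) :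
    aev k (rename Fin.castSucc f) = f := by
  have : (aev k).comp (rename Fin.castSucc) = AlgHom.id k _ := by
    apply MvPolynomial.algHom_ext
    intro i
    simp [aev]
  exact DFunLike.congr_fun this f

theorem decomp {k : Type*} [Field k] (f : MvPolynomial (Fin 6) k) :
    ∃ q, f = rename Fin.castSucc (aev k f) + X (Fin.last 5) * q := by
  induction f using MvPolynomial.induction_on with
  | C a => exact ⟨0, by simp [aev]⟩
  | add p q hp hq =>
    obtain ⟨p', hp⟩ := hp
    obtain ⟨q', hq⟩ := hq
    refine ⟨p' + q', ?_⟩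
    rw [map_add, map_add, mul_add]
    nth_rw 1 [hp, hq]
    ring
  | mul_X p i hp =>
    obtain ⟨p', hp⟩ := hp
    rw [map_mul, map_mul]
    induction i using Fin.lastCases with
    | last =>
      refine ⟨p, ?_⟩
      have : aev k (X (Fin.last 5)) = 0 := by
        unfold aev; rw [aeval_X, Fin.lastCases_last]
      rw [this, map_zero]; ring
    | cast i =>
      refine ⟨p' * X i.castSucc, ?_⟩
      have : aev k (X i.castSucc) = X i := by
        unfold aev; rw [aeval_X, Fin.lastCases_castSucc]
      rw [this, rename_X]
      nth_rw 1 [hp]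
      ring

theorem coeff_aev {k : Type*} [Field k] (f : MvPolynomial (Fin 6) k) (a b c d e : ℕ) :
    coeff (m5 a b c d e) (aev k f) = coeff (m6 a b c d e 0) f := by
  obtain ⟨q, hq⟩ := decomp f
  conv_rhs => rw [hq, coeff_add, coeff_ren0, coeff_X5_0, add_zero]

theorem X5_mul_mem {k : Type*} [Field k] (f : MvPolynomial (Fin 6) k) :
    X (Fin.last 5) * f ∈ annIdeal (perazzoF k) ↔ aev k f ∈ annIdeal (perazzoCubic k) := by
  rw [ann_F_iff, ann_cubic_iff]
  simp only [coeff_X5_0, coeff_X5_1, coeff_aev, add_zero]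
  tauto

theorem aev_mem {k : Type*} [Field k] {f : MvPolynomial (Fin 6) k}
    (h : f ∈ annIdeal (perazzoF k)) : aev k f ∈ annIdeal (perazzoCubic k) :=
  (X5_mul_mem f).1 (Ideal.mul_mem_left _ _ h)

theorem exists_lift {k : Type*} [Field k] {f : MvPolynomial (Fin 5) k}
    (h : f ∈ annIdeal (perazzoCubic k)) :
    ∃ q : MvPolynomial (Fin 6) k,
      (rename Fin.castSucc f : MvPolynomial (Fin 6) k) -
        (X (Fin.last 5) : MvPolynomial (Fin 6) k) * q ∈ annIdeal (perazzoF k) := by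
  classical
  rw [ann_cubic_iff] at h
  refine ⟨monomial (m6 0 1 0 0 0 0) (coeff (m5 2 0 0 0 0) f) +
    monomial (m6 0 0 1 0 0 0) (coeff (m5 1 1 0 0 0) f) +
    monomial (m6 0 0 0 1 0 0) (coeff (m5 1 0 0 0 1) f) +
    monomial (m6 0 0 0 2 0 0) (coeff (m5 1 0 0 1 1) f + coeff (m5 0 1 0 0 2) f) +
    monomial (m6 0 0 0 1 1 0) (coeff (m5 1 0 0 0 2) f) +
    monomial (m6 1 0 0 1 0 0) (coeff (m5 2 0 0 0 1) f) +
    monomial (m6 0 1 0 1 0 0) (coeff (m5 2 0 0 1 0) f + coeff (m5 1 1 0 0 1) f) +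
    monomial (m6 1 0 0 2 0 0) (coeff (m5 2 0 0 1 1) f + coeff (m5 1 1 0 0 2) f), ?_⟩
  rw [ann_F_iff]
  obtain ⟨h1, h2, h3, h4, h5, h6, h7, h8, h9, h10, h11, h12⟩ := h
  simp only [coeff_sub, coeff_ren0, coeff_ren1, coeff_X5_0, coeff_X5_1]
  simp [coeff_monomial, m6_inj, h1, h2, h3, h4, h5, h6, h7, h8, h9, h10, h11, h12]

theorem part1 {k : Type*} [Field k] {f g : MvPolynomial (Fin 5) k}
    (hf : f ∈ annIdeal (perazzoCubic k)) (hg : g ∈ annIdeal (perazzoCubic k)) :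
    contract (f * g) (perazzoG k) = 0 := by
  obtain ⟨q, hq⟩ := exists_lift hg
  have h1 : X (Fin.last 5) * rename Fin.castSucc f ∈ annIdeal (perazzoF k) := by
    rw [X5_mul_mem, aev_rename]; exact hf
  have h2 : rename Fin.castSucc (f * g) ∈ annIdeal (perazzoF k) := by
    have := Ideal.add_mem _ (Ideal.mul_mem_left _ (rename Fin.castSucc f) hq)
      (Ideal.mul_mem_left _ q h1)
    convert this using 1
    rw [map_mul]; ring
  rw [ann_F_iff] at h2
  simp only [coeff_ren0, coeff_ren1, zero_add, add_zero] at h2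
  apply ann_G_of
  tauto

theorem X5_sq_mem {k : Type*} [Field k] :
    (X (Fin.last 5) : MvPolynomial (Fin 6) k) ^ 2 ∈ annIdeal (perazzoF k) := by
  rw [sq, X5_mul_mem]
  unfold aev
  rw [aeval_X, Fin.lastCases_last]
  exact Ideal.zero_mem _

theorem finrank_grade {k : Type*} [Field k] {d n : ℕ}
    (Ψ : MvPolynomial (Fin 6) k →ₗ[k] (Fin n → k))
    (h1 : ∀ f, f.IsHomogeneous d → (f ∈ annIdeal (perazzoF k) ↔ Ψ f = 0))
    (h2 : ∀ v, ∃ f, f.IsHomogeneous d ∧ Ψ f = v) :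
    Module.finrank k (perazzoCGrade k d) = n := by
  set H := homogeneousSubmodule (Fin 6) k d with hH
  set M := (Ideal.Quotient.mkₐ k (annIdeal (perazzoF k))).toLinearMap with hM
  let φ := M.domRestrict H
  let ψ := Ψ.domRestrict H
  have hr : LinearMap.range φ = perazzoCGrade k d := by
    rw [LinearMap.range_domRestrict]; rfl
  have hs : LinearMap.range ψ = ⊤ := by
    rw [LinearMap.range_eq_top]
    intro v
    obtain ⟨f, hf, hv⟩ := h2 v
    exact ⟨⟨f, (mem_homogeneousSubmodule d f).2 hf⟩, hv⟩
  have hk : LinearMap.ker φ = LinearMap.ker ψ := by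
    ext ⟨f, hf⟩
    rw [LinearMap.mem_ker, LinearMap.mem_ker]
    exact (Ideal.Quotient.eq_zero_iff_mem).trans (h1 f ((mem_homogeneousSubmodule d f).1 hf))
  rw [← hr, (φ.quotKerEquivRange.symm.trans ((Submodule.quotEquivOfEq _ _ hk).trans
    (ψ.quotKerEquivRange.trans (LinearEquiv.ofTop _ hs)))).finrank_eq]
  simp

theorem coeff_hom {k : Type*} [Field k] {f : MvPolynomial (Fin 6) k} {n : ℕ}
    (hf : f.IsHomogeneous n) (a b c d e t : ℕ) (h : a + b + c + d + e + t ≠ n) :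
    coeff (m6 a b c d e t) f = 0 := hf.coeff_eq_zero (by rwa [m6_deg])

theorem hom_m6 {k : Type*} [Field k] {n : ℕ} (a b c d e t : ℕ) (r : k)
    (h : a + b + c + d + e + t = n) : (monomial (m6 a b c d e t) r).IsHomogeneous n :=
  isHomogeneous_monomial _ (by rwa [m6_deg])

/-- coefficient functional -/
noncomputable def lc (k : Type*) [Field k] (a b c d e t : ℕ) : MvPolynomial (Fin 6) k →ₗ[k] k :=
  lcoeff k (m6 a b c d e t)

theorem lc_apply {k : Type*} [Field k] (a b c d e t : ℕ) (f : MvPolynomial (Fin 6) k) :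
    lc k a b c d e t f = coeff (m6 a b c d e t) f := rfl

theorem rank0 (k : Type*) [Field k] : Module.finrank k (perazzoCGrade k 0) = 1 := by
  classical
  refine finrank_grade (LinearMap.pi ![lc k 0 0 0 0 0 0]) ?_ ?_
  · intro f hf
    rw [ann_F_iff]
    have h := coeff_hom hf
    simp [h, funext_iff, lc_apply]
  · intro v
    refine ⟨monomial (m6 0 0 0 0 0 0) (v 0), hom_m6 _ _ _ _ _ _ _ rfl, ?_⟩
    ext i
    fin_cases i
    simp [lc_apply]

theorem rank1 (k : Type*) [Field k] : Module.finrank k (perazzoCGrade k 1) = 6 := by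
  classical
  refine finrank_grade (LinearMap.pi ![lc k 1 0 0 0 0 0, lc k 0 1 0 0 0 0, lc k 0 0 1 0 0 0,
    lc k 0 0 0 1 0 0, lc k 0 0 0 0 1 0, lc k 0 0 0 0 0 1]) ?_ ?_
  · intro f hf
    rw [ann_F_iff]
    have h := coeff_hom hf
    simp [h, funext_iff, lc_apply, Fin.forall_fin_succ]
  · intro v
    refine ⟨monomial (m6 1 0 0 0 0 0) (v 0) + monomial (m6 0 1 0 0 0 0) (v 1) +
      monomial (m6 0 0 1 0 0 0) (v 2) + monomial (m6 0 0 0 1 0 0) (v 3) +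
      monomial (m6 0 0 0 0 1 0) (v 4) + monomial (m6 0 0 0 0 0 1) (v 5), ?_, ?_⟩
    · repeat' apply IsHomogeneous.add
      all_goals exact hom_m6 _ _ _ _ _ _ _ rfl
    ext i
    fin_cases i <;> simp [lc_apply, coeff_monomial, m6_inj]

theorem rank2 (k : Type*) [Field k] : Module.finrank k (perazzoCGrade k 2) = 10 := by
  classical
  refine finrank_grade (LinearMap.pi ![lc k 0 0 0 2 0 0, lc k 0 0 0 1 1 0, lc k 0 0 0 0 2 0,
    lc k 0 0 0 0 1 1, lc k 1 0 0 0 0 1, lc k 0 0 0 1 0 1 + lc k 1 0 0 0 1 0,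
    lc k 1 0 0 1 0 0 + lc k 0 1 0 0 1 0, lc k 0 1 0 0 0 1 + lc k 2 0 0 0 0 0,
    lc k 0 0 1 0 0 1 + lc k 1 1 0 0 0 0, lc k 0 1 0 1 0 0 + lc k 0 0 1 0 1 0]) ?_ ?_
  · intro f hf
    rw [ann_F_iff]
    have h := coeff_hom hf
    simp [h, funext_iff, lc_apply, Fin.forall_fin_succ]
  · intro v
    refine ⟨monomial (m6 0 0 0 2 0 0) (v 0) + monomial (m6 0 0 0 1 1 0) (v 1) +
      monomial (m6 0 0 0 0 2 0) (v 2) + monomial (m6 0 0 0 0 1 1) (v 3) +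
      monomial (m6 1 0 0 0 0 1) (v 4) + monomial (m6 0 0 0 1 0 1) (v 5) +
      monomial (m6 1 0 0 1 0 0) (v 6) + monomial (m6 0 1 0 0 0 1) (v 7) +
      monomial (m6 0 0 1 0 0 1) (v 8) + monomial (m6 0 1 0 1 0 0) (v 9), ?_, ?_⟩
    · repeat' apply IsHomogeneous.add
      all_goals exact hom_m6 _ _ _ _ _ _ _ rfl
    ext i
    fin_cases i <;> simp [lc_apply, coeff_monomial, m6_inj]

theorem rank3 (k : Type*) [Field k] : Module.finrank k (perazzoCGrade k 3) = 6 := by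
  classical
  refine finrank_grade (LinearMap.pi ![
    lc k 0 0 0 2 0 1 + lc k 1 0 0 1 1 0 + lc k 0 1 0 0 2 0,
    lc k 0 0 0 1 1 1 + lc k 1 0 0 0 2 0, lc k 0 0 0 0 2 1,
    lc k 1 0 0 1 0 1 + lc k 0 1 0 0 1 1 + lc k 2 0 0 0 1 0,
    lc k 0 1 0 1 0 1 + lc k 0 0 1 0 1 1 + lc k 2 0 0 1 0 0 + lc k 1 1 0 0 1 0,
    lc k 1 0 0 2 0 0 + lc k 0 1 0 1 1 0 + lc k 0 0 1 0 2 0]) ?_ ?_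
  · intro f hf
    rw [ann_F_iff]
    have h := coeff_hom hf
    simp [h, funext_iff, lc_apply, Fin.forall_fin_succ]
  · intro v
    refine ⟨monomial (m6 0 0 0 2 0 1) (v 0) + monomial (m6 0 0 0 1 1 1) (v 1) +
      monomial (m6 0 0 0 0 2 1) (v 2) + monomial (m6 1 0 0 1 0 1) (v 3) +
      monomial (m6 0 1 0 1 0 1) (v 4) + monomial (m6 1 0 0 2 0 0) (v 5), ?_, ?_⟩
    · repeat' apply IsHomogeneous.add
      all_goals exact hom_m6 _ _ _ _ _ _ _ rfl
    ext i
    fin_cases i <;> simp [lc_apply, coeff_monomial, m6_inj]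

theorem rank4 (k : Type*) [Field k] : Module.finrank k (perazzoCGrade k 4) = 1 := by
  classical
  refine finrank_grade (LinearMap.pi ![lc k 1 0 0 2 0 1 + lc k 0 1 0 1 1 1 + lc k 0 0 1 0 2 1 +
    lc k 2 0 0 1 1 0 + lc k 1 1 0 0 2 0]) ?_ ?_
  · intro f hf
    rw [ann_F_iff]
    have h := coeff_hom hf
    simp [h, funext_iff, lc_apply]
  · intro v
    refine ⟨monomial (m6 1 0 0 2 0 1) (v 0), hom_m6 _ _ _ _ _ _ _ rfl, ?_⟩
    ext i
    fin_cases i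
    simp [lc_apply, coeff_monomial, m6_inj]

theorem rank5 (k : Type*) [Field k] (d : ℕ) (hd : 4 < d) :
    Module.finrank k (perazzoCGrade k d) = 0 := by
  classical
  refine finrank_grade (0 : _ →ₗ[k] (Fin 0 → k)) ?_ ?_
  · intro f hf
    rw [ann_F_iff]
    have h := fun a b c d e t h' => coeff_hom hf a b c d e t (ne_of_lt (lt_of_le_of_lt h' hd))
    simp [h]
  · intro v
    exact ⟨0, isHomogeneous_zero _ _ _, Subsingleton.elim _ _⟩

theorem dual_repr {k : Type*} [Field k]
    (a : Polynomial k ⧸ Ideal.span {(Polynomial.X : Polynomial k) ^ 2}) :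
    ∃ c d : k, a = Ideal.Quotient.mk _ (Polynomial.C c + Polynomial.C d * Polynomial.X) := by
  obtain ⟨p, rfl⟩ := Ideal.Quotient.mk_surjective a
  refine ⟨p.coeff 0, p.coeff 1, ?_⟩
  rw [Ideal.Quotient.eq, Ideal.mem_span_singleton, Polynomial.X_pow_dvd_iff]
  intro d hd
  interval_cases d <;> simp

theorem free_of_exact {k C : Type*} [Field k] [CommRing C] [Algebra k C]
    (ι : (Polynomial k ⧸ Ideal.span {(Polynomial.X : Polynomial k) ^ 2}) →+* C) (t : C)
    (hι : ∀ p, ι (Ideal.Quotient.mk _ p) = Polynomial.aeval t p)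
    (hker : ∀ c, t * c = 0 → ∃ d, c = t * d) :
    @Module.Free (Polynomial k ⧸ Ideal.span {(Polynomial.X : Polynomial k) ^ 2}) C _ _
      (Module.compHom C ι) := by
  have ht : t * t = 0 := by
    have h := hι (Polynomial.X ^ 2)
    rw [Ideal.Quotient.eq_zero_iff_mem.2 (Ideal.mem_span_singleton_self _), map_zero] at h
    simpa [sq] using h.symm
  let J : Ideal C := Ideal.span {t}
  let b := Module.Basis.ofVectorSpace k (C ⧸ J)
  choose s hs using fun i => Ideal.Quotient.mk_surjective (b i)
  choose c d hcd using dual_repr (k := k)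
  have hιa : ∀ a, ι a = algebraMap k C (c a) + algebraMap k C (d a) * t := by
    intro a
    conv_lhs => rw [hcd a, hι]
    simp
  have key : ∀ (S : Finset _) (g : _ → k) (z : C),
      ∑ i ∈ S, algebraMap k C (g i) * s i = t * z → ∀ i ∈ S, g i = 0 := by
    intro S g z h
    refine linearIndependent_iff'.1 b.linearIndependent S g ?_
    have h2 := congrArg (Ideal.Quotient.mk J) h
    rw [map_mul, Ideal.Quotient.eq_zero_iff_mem.2 (Ideal.subset_span rfl : t ∈ J), zero_mul,
      map_sum] at h2
    rw [← h2]
    refine Finset.sum_congr rfl fun i _ => ?_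
    rw [map_mul, hs, Algebra.smul_def]
    rfl
  have key2 : ∀ x : C, ∃ (g : _ →₀ k) (z : C),
      x = ∑ i ∈ g.support, algebraMap k C (g i) * s i + t * z := by
    intro x
    refine ⟨b.repr (Ideal.Quotient.mk J x), ?_⟩
    set g := b.repr (Ideal.Quotient.mk J x) with hg
    have h : x - ∑ i ∈ g.support, algebraMap k C (g i) * s i ∈ J := by
      rw [← Ideal.Quotient.eq_zero_iff_mem, map_sub, map_sum, sub_eq_zero]
      have := b.linearCombination_repr (Ideal.Quotient.mk J x)
      rw [Finsupp.linearCombination_apply, Finsupp.sum] at this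
      rw [← this]
      refine Finset.sum_congr rfl fun i _ => ?_
      rw [map_mul, hs, Algebra.smul_def]
      rfl
    obtain ⟨z, hz⟩ := Ideal.mem_span_singleton'.1 h
    exact ⟨z, by rw [mul_comm, hz]; ring⟩
  let _ : Module (Polynomial k ⧸ Ideal.span {(Polynomial.X : Polynomial k) ^ 2}) C :=
    Module.compHom C ι
  have hsm : ∀ (a : Polynomial k ⧸ Ideal.span {(Polynomial.X : Polynomial k) ^ 2}) (x : C),
      a • x = ι a * x := fun _ _ => rfl
  have hLI : LinearIndependent
      (Polynomial k ⧸ Ideal.span {(Polynomial.X : Polynomial k) ^ 2}) s := by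
    rw [linearIndependent_iff']
    intro S g hg
    simp only [hsm, hιa, add_mul, Finset.sum_add_distrib] at hg
    have e : ∑ i ∈ S, algebraMap k C (d (g i)) * t * s i =
        t * ∑ i ∈ S, algebraMap k C (d (g i)) * s i := by
      rw [Finset.mul_sum]
      exact Finset.sum_congr rfl fun i _ => by ring
    rw [e] at hg
    have h1 := key S (fun i => c (g i)) (-∑ i ∈ S, algebraMap k C (d (g i)) * s i)
      (by rw [mul_neg]; exact eq_neg_of_add_eq_zero_left hg)
    have h0 : ∑ i ∈ S, algebraMap k C (c (g i)) * s i = 0 :=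
      Finset.sum_eq_zero fun i hi => by
        have : c (g i) = 0 := h1 i hi
        rw [this, map_zero, zero_mul]
    rw [h0, zero_add] at hg
    obtain ⟨z, hz⟩ := hker _ hg
    have h2 := key S (fun i => d (g i)) z hz
    intro i hi
    have e1 : c (g i) = 0 := h1 i hi
    have e2 : d (g i) = 0 := h2 i hi
    rw [hcd (g i), e1, e2]
    simp
  have hmem : ∀ (g : _ →₀ k), ∑ i ∈ g.support, algebraMap k C (g i) * s i ∈
      Submodule.span (Polynomial k ⧸ Ideal.span {(Polynomial.X : Polynomial k) ^ 2})
        (Set.range s) := by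
    intro g
    refine Submodule.sum_mem _ fun i _ => ?_
    have : algebraMap k C (g i) * s i =
        (Ideal.Quotient.mk (Ideal.span {(Polynomial.X : Polynomial k) ^ 2})
          (Polynomial.C (g i))) • s i := by
      rw [hsm, hι, Polynomial.aeval_C]
    rw [this]
    exact Submodule.smul_mem _ _ (Submodule.subset_span ⟨i, rfl⟩)
  have hspan : ⊤ ≤ Submodule.span
      (Polynomial k ⧸ Ideal.span {(Polynomial.X : Polynomial k) ^ 2}) (Set.range s) := by
    rintro x -
    obtain ⟨g, z, hx⟩ := key2 x
    obtain ⟨g', z', hz⟩ := key2 z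
    have : t * z = (Ideal.Quotient.mk (Ideal.span {(Polynomial.X : Polynomial k) ^ 2})
          Polynomial.X) • ∑ i ∈ g'.support, algebraMap k C (g' i) * s i := by
      rw [hsm, hι, Polynomial.aeval_X, hz, mul_add, ← mul_assoc t t, ht, zero_mul, add_zero]
    rw [hx, this]
    exact Submodule.add_mem _ (hmem g) (Submodule.smul_mem _ _ (hmem g'))
  exact Module.Free.of_basis (Module.Basis.mk hLI hspan)

theorem part2 (k : Type*) [Field k] :
    (∃ ι : (Polynomial k ⧸ Ideal.span {(Polynomial.X : Polynomial k) ^ 2}) →+*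
        (MvPolynomial (Fin 6) k ⧸ annIdeal (perazzoF k)),
      (∀ p : Polynomial k,
        ι (Ideal.Quotient.mk (Ideal.span {(Polynomial.X : Polynomial k) ^ 2}) p) =
          Ideal.Quotient.mk (annIdeal (perazzoF k))
            (Polynomial.aeval (MvPolynomial.X (Fin.last 5) : MvPolynomial (Fin 6) k) p)) ∧
      Function.Injective ι ∧
      @Module.Free (Polynomial k ⧸ Ideal.span {(Polynomial.X : Polynomial k) ^ 2})
        (MvPolynomial (Fin 6) k ⧸ annIdeal (perazzoF k)) _ _
        (Module.compHom (MvPolynomial (Fin 6) k ⧸ annIdeal (perazzoF k)) ι)) := by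
  classical
  let φ : Polynomial k →+* (MvPolynomial (Fin 6) k ⧸ annIdeal (perazzoF k)) :=
    (Ideal.Quotient.mk (annIdeal (perazzoF k))).comp
      (Polynomial.aeval (MvPolynomial.X (Fin.last 5) : MvPolynomial (Fin 6) k)).toRingHom
  have hφ : ∀ p, φ p = Ideal.Quotient.mk (annIdeal (perazzoF k))
            (Polynomial.aeval (MvPolynomial.X (Fin.last 5) : MvPolynomial (Fin 6) k) p) :=
    fun _ => rfl
  have h0 : ∀ a ∈ Ideal.span {(Polynomial.X : Polynomial k) ^ 2}, φ a = 0 := by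
    intro a ha
    obtain ⟨q, rfl⟩ := Ideal.mem_span_singleton.1 ha
    rw [map_mul, hφ, map_pow, Polynomial.aeval_X, Ideal.Quotient.eq_zero_iff_mem.2 X5_sq_mem,
      zero_mul]
  have hl : ∀ p, Ideal.Quotient.lift _ φ h0 (Ideal.Quotient.mk _ p) =
    Ideal.Quotient.mk (annIdeal (perazzoF k))
      (Polynomial.aeval (MvPolynomial.X (Fin.last 5) : MvPolynomial (Fin 6) k) p) :=
    fun p => rfl
  refine ⟨Ideal.Quotient.lift _ φ h0, hl, ?_, ?_⟩
  · rw [injective_iff_map_eq_zero]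
    intro a ha
    obtain ⟨c, d, rfl⟩ := dual_repr a
    rw [hl, Ideal.Quotient.eq_zero_iff_mem] at ha
    have e : Polynomial.aeval (MvPolynomial.X (Fin.last 5) : MvPolynomial (Fin 6) k)
        (Polynomial.C c + Polynomial.C d * Polynomial.X) =
        monomial (m6 0 0 0 0 0 0) c + monomial (m6 0 0 0 0 0 1) d := by
      rw [map_add, map_mul, Polynomial.aeval_C, Polynomial.aeval_C, Polynomial.aeval_X, X5_eq,
        MvPolynomial.algebraMap_eq, C_mul_monomial, mul_one]
      congr 1
      rw [C_apply]
      congr 2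
      rw [Finsupp.ext_iff]; simp [m6, Fin.forall_fin_succ]
    rw [e, ann_F_iff] at ha
    have h1 := ha.1
    have h2 := ha.2.1.2.2.2.2.2
    simp [coeff_monomial, m6_inj] at h1 h2
    simp [h1, h2]
  · refine free_of_exact _ (Ideal.Quotient.mk (annIdeal (perazzoF k)) (X (Fin.last 5))) ?_ ?_
    · intro p
      rw [hl]
      exact (Polynomial.aeval_algHom_apply (Ideal.Quotient.mkₐ k (annIdeal (perazzoF k)))
        (X (Fin.last 5)) p).symm
    · intro c hc
      obtain ⟨f, rfl⟩ := Ideal.Quotient.mk_surjective c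
      rw [← map_mul, Ideal.Quotient.eq_zero_iff_mem, X5_mul_mem] at hc
      obtain ⟨q, hq⟩ := exists_lift hc
      obtain ⟨r, hr⟩ := decomp f
      refine ⟨Ideal.Quotient.mk _ (q + r), ?_⟩
      rw [← map_mul, Ideal.Quotient.eq]
      convert hq using 1
      nth_rw 1 [hr]
      ring

theorem part3 (k : Type*) [Field k] :
    (∃ π : (MvPolynomial (Fin 6) k ⧸ annIdeal (perazzoF k)) →+*
        (MvPolynomial (Fin 5) k ⧸ annIdeal (perazzoCubic k)),
      (∀ f : MvPolynomial (Fin 6) k,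
        π (Ideal.Quotient.mk (annIdeal (perazzoF k)) f) =
          Ideal.Quotient.mk (annIdeal (perazzoCubic k))
            (MvPolynomial.aeval (fun i => Fin.lastCases 0 MvPolynomial.X i) f)) ∧
      Function.Surjective π ∧
      RingHom.ker π =
        Ideal.span {Ideal.Quotient.mk (annIdeal (perazzoF k))
          (MvPolynomial.X (Fin.last 5) : MvPolynomial (Fin 6) k)}) := by
  let φ : MvPolynomial (Fin 6) k →+* (MvPolynomial (Fin 5) k ⧸ annIdeal (perazzoCubic k)) :=
    (Ideal.Quotient.mk (annIdeal (perazzoCubic k))).comp (aev k).toRingHom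
  have h0 : ∀ a ∈ annIdeal (perazzoF k), φ a = 0 := fun a ha =>
    Ideal.Quotient.eq_zero_iff_mem.2 (aev_mem ha)
  have hl : ∀ f, Ideal.Quotient.lift _ φ h0 (Ideal.Quotient.mk _ f) =
    Ideal.Quotient.mk (annIdeal (perazzoCubic k)) (aev k f) := fun f => rfl
  refine ⟨Ideal.Quotient.lift _ φ h0, hl, ?_, ?_⟩
  · intro y
    obtain ⟨f, rfl⟩ := Ideal.Quotient.mk_surjective y
    refine ⟨Ideal.Quotient.mk _ (rename Fin.castSucc f), ?_⟩
    rw [hl, aev_rename]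
  · ext c
    obtain ⟨f, rfl⟩ := Ideal.Quotient.mk_surjective c
    rw [RingHom.mem_ker, hl, Ideal.Quotient.eq_zero_iff_mem, Ideal.mem_span_singleton']
    constructor
    · intro hc
      obtain ⟨q, hq⟩ := exists_lift hc
      obtain ⟨r, hr⟩ := decomp f
      refine ⟨Ideal.Quotient.mk _ (q + r), ?_⟩
      rw [← map_mul, eq_comm, Ideal.Quotient.eq]
      convert hq using 1
      nth_rw 1 [hr]
      ring
    · rintro ⟨a, ha⟩
      obtain ⟨a, rfl⟩ := Ideal.Quotient.mk_surjective a
      rw [← map_mul, eq_comm, Ideal.Quotient.eq] at ha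
      have h := aev_mem ha
      rw [map_sub, map_mul] at h
      have h5 : aev k (X (Fin.last 5)) = 0 := by
        unfold aev; rw [aeval_X, Fin.lastCases_last]
      rwa [h5, mul_zero, sub_zero] at h

end helpers

/-- **Example (Example 3.6 / SL2counterex, the free-extension structure).** For
`F_B = XU² + YUV + ZV²`, `G = X²UV + XYV²` and `F = T·F_B + G`, one has `(I_B)² ∘ G = 0`;
hence `C = S/Ann_S(F)` is a free extension of `A = k[t]/(t²)` with fiber `B = R/Ann(F_B)`
(via `ι : t ↦ t` and `π : x_i ↦ x_i, t ↦ 0`, with `ker π = ι(m_A)·C` generated by the class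
of `t`), and the Hilbert function of `C` is `(1,6,10,6,1)`. -/
theorem perazzo_free_extension
    (k : Type*) [Field k] [CharZero k] :
    (∀ f ∈ annIdeal (perazzoCubic k), ∀ g ∈ annIdeal (perazzoCubic k),
      contract (f * g) (perazzoG k) = 0) ∧
    (∃ ι : (Polynomial k ⧸ Ideal.span {(Polynomial.X : Polynomial k) ^ 2}) →+*
        (MvPolynomial (Fin 6) k ⧸ annIdeal (perazzoF k)),
      (∀ p : Polynomial k,
        ι (Ideal.Quotient.mk (Ideal.span {(Polynomial.X : Polynomial k) ^ 2}) p) =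
          Ideal.Quotient.mk (annIdeal (perazzoF k))
            (Polynomial.aeval (MvPolynomial.X (Fin.last 5) : MvPolynomial (Fin 6) k) p)) ∧
      Function.Injective ι ∧
      @Module.Free (Polynomial k ⧸ Ideal.span {(Polynomial.X : Polynomial k) ^ 2})
        (MvPolynomial (Fin 6) k ⧸ annIdeal (perazzoF k)) _ _
        (Module.compHom (MvPolynomial (Fin 6) k ⧸ annIdeal (perazzoF k)) ι)) ∧
    (∃ π : (MvPolynomial (Fin 6) k ⧸ annIdeal (perazzoF k)) →+*
        (MvPolynomial (Fin 5) k ⧸ annIdeal (perazzoCubic k)),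
      (∀ f : MvPolynomial (Fin 6) k,
        π (Ideal.Quotient.mk (annIdeal (perazzoF k)) f) =
          Ideal.Quotient.mk (annIdeal (perazzoCubic k))
            (MvPolynomial.aeval (fun i => Fin.lastCases 0 MvPolynomial.X i) f)) ∧
      Function.Surjective π ∧
      RingHom.ker π =
        Ideal.span {Ideal.Quotient.mk (annIdeal (perazzoF k))
          (MvPolynomial.X (Fin.last 5) : MvPolynomial (Fin 6) k)}) ∧
    (Module.finrank k (perazzoCGrade k 0) = 1 ∧ Module.finrank k (perazzoCGrade k 1) = 6 ∧
      Module.finrank k (perazzoCGrade k 2) = 10 ∧ Module.finrank k (perazzoCGrade k 3) = 6 ∧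
      Module.finrank k (perazzoCGrade k 4) = 1 ∧
      ∀ d : ℕ, 4 < d → Module.finrank k (perazzoCGrade k d) = 0) := by
  exact ⟨fun f hf g hg => part1 hf hg, part2 k, part3 k, rank0 k, rank1 k, rank2 k, rank3 k,
    rank4 k, rank5 k⟩
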